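/- arXiv:1907.12243 — 4 statements merged into one kernel-verified Lean document; each statement's English description precedes it below -/
import Mathlib

section
/- For every k ≥ 1 and every n ≥ 0, the kth associated polynomial S_n^{[k]} is a polynomial of degree exactly n whose leading coefficient equals ‖Q_{k−1}‖²_{μ_ρ} = ∫_{−1}^{1} Q_{k−1}(x)² dμ_ρ(x). -/
open MeasureTheory Polynomial Filter
open scoped Classical

noncomputable section

/-- The discrete Sobolev inner product with a single derivative order `d j` at each
mass point `c j`, with weight `η j`. -/
def sobInner (μ : Measure ℝ) {N : ℕ} (c : Fin N → ℝ) (d : Fin N → ℕ) (η : Fin N → ℝ)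
    (f g : Polynomial ℝ) : ℝ :=
  (∫ x in Set.Icc (-1:ℝ) 1, f.eval x * g.eval x ∂μ) +
    ∑ j, η j * ((derivative^[d j] f).eval (c j)) * ((derivative^[d j] g).eval (c j))

/-- The general discrete Sobolev inner product with weights `η j i` for the `i`-th
derivatives, `0 ≤ i ≤ d j`, at each mass point `c j`. -/
def sobInner2 (μ : Measure ℝ) {N : ℕ} (c : Fin N → ℝ) (d : Fin N → ℕ) (η : Fin N → ℕ → ℝ)
    (f g : Polynomial ℝ) : ℝ :=
  (∫ x in Set.Icc (-1:ℝ) 1, f.eval x * g.eval x ∂μ) +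
    ∑ j, ∑ i ∈ Finset.range (d j + 1),
      η j i * ((derivative^[i] f).eval (c j)) * ((derivative^[i] g).eval (c j))

/-- Sequential order for the data of a discrete Sobolev inner product:
`d` is nondecreasing and each `c k` lies outside the convex hull of
`(-1,1) ∪ {c 1, …, c (k-1)}`. -/
def SeqOrdered {N : ℕ} (c : Fin N → ℝ) (d : Fin N → ℕ) : Prop :=
  (∀ i j : Fin N, i ≤ j → d i ≤ d j) ∧
    ∀ k : Fin N, c k ∉ convexHull ℝ (Set.Ioo (-1:ℝ) 1 ∪ c '' {j : Fin N | j < k})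

/-- The polynomial ρ(x) = ∏_{c j < -1} (x - c j)^(d j + 1) · ∏_{c j > 1} (c j - x)^(d j + 1). -/
def rhoPoly {N : ℕ} (c : Fin N → ℝ) (d : Fin N → ℕ) : Polynomial ℝ :=
  (∏ j ∈ Finset.univ.filter (fun j => c j < -1), (X - C (c j)) ^ (d j + 1)) *
    ∏ j ∈ Finset.univ.filter (fun j => (1:ℝ) < c j), (C (c j) - X) ^ (d j + 1)

/-- ν = number of mass points greater than 1. -/
def nuCount {N : ℕ} (c : Fin N → ℝ) : ℕ :=
  (Finset.univ.filter (fun j : Fin N => (1:ℝ) < c j)).card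

/-- μ belongs to the Nevai class M(0,1): supp μ = [-1,1] and the monic orthogonal
polynomials of μ satisfy a three-term recurrence with aₙ → 1/2 and bₙ → 0. -/
def NevaiClass (μ : Measure ℝ) : Prop :=
  μ (Set.Icc (-1:ℝ) 1)ᶜ = 0 ∧
  (∀ x ∈ Set.Icc (-1:ℝ) 1, ∀ ε > 0, 0 < μ (Metric.ball x ε)) ∧
  ∃ (P : ℕ → Polynomial ℝ) (a b : ℕ → ℝ),
    (∀ n, (P n).Monic) ∧ (∀ n, (P n).natDegree = n) ∧
    (∀ n, ∀ m < n, (∫ x in Set.Icc (-1:ℝ) 1, x ^ m * (P n).eval x ∂μ) = 0) ∧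
    P 0 = 1 ∧ P 1 = X - C (b 0) ∧
    (∀ n, P (n + 2) = (X - C (b (n + 1))) * P (n + 1) - C ((a (n + 1)) ^ 2) * P n) ∧
    Tendsto a atTop (nhds (1 / 2)) ∧ Tendsto b atTop (nhds 0)

/-- The segment [-1,1] regarded as a subset of ℂ. -/
def segIcc : Set ℂ := Complex.ofReal '' Set.Icc (-1:ℝ) 1

/-- Markov-type function: z ↦ ∫ q(x) / (z - x) w(x) dμ(x). -/
def markovHat (μ : Measure ℝ) (w q : Polynomial ℝ) (z : ℂ) : ℂ :=
  ∫ x in Set.Icc (-1:ℝ) 1, ((q.eval x * w.eval x : ℝ) : ℂ) / (z - (x : ℂ)) ∂μ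

/-- Associated function: z ↦ ∫ (p(z) - p(x)) / (z - x) · q(x) w(x) dμ(x). -/
def assocFun (μ : Measure ℝ) (w q p : Polynomial ℝ) (z : ℂ) : ℂ :=
  ∫ x in Set.Icc (-1:ℝ) 1,
    ((aeval z p - ((p.eval x : ℝ) : ℂ)) / (z - (x : ℂ))) * ((q.eval x * w.eval x : ℝ) : ℂ) ∂μ

/-- A function changes sign at `t` if arbitrarily close to `t`, on the left and right,
it takes values of opposite signs. -/
def SignChangeAt (p : Polynomial ℝ) (t : ℝ) : Prop :=
  ∀ δ > 0, ∃ x ∈ Set.Ioo (t - δ) t, ∃ y ∈ Set.Ioo t (t + δ), p.eval x * p.eval y < 0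

/-- N₀(f; A): number of zeros of `f` in `A`, counted with multiplicity. -/
def N0 (f : Polynomial ℝ) (A : Set ℝ) : ℕ :=
  (f.roots.filter (fun x => x ∈ A)).card

/-!
The difference quotient expands as `(p(z) - p(x)) / (z - x) = ∑ᵢ zⁱ pᵢ₊₁(x)`, where `pᵢ` is `p`
with its `i` lowest coefficients dropped and the rest shifted down. Integrating against
`Q_{k-1} dμ_ρ`, the coefficient of `zⁱ` in `S_n^{[k]}` is, for `i < n + k`, the pairing of `Q_{k-1}`
with a monic polynomial of degree `n + k - 1 - i`, and it is zero for larger `i`. By orthogonality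
it also vanishes for `n < i < n + k`, while for `i = n` it is the pairing of `Q_{k-1}` with a monic
polynomial of its own degree, that is, `‖Q_{k-1}‖²`.
-/

lemma eval_divByMonic_X_sub_C {F : Type*} [Field F] (p : F[X]) {z x : F} (hzx : z ≠ x) :
    (p /ₘ (X - C z)).eval x = (p.eval z - p.eval x) / (z - x) := by
  have eval_division := congrArg (eval x) (X_sub_C_mul_divByMonic_eq_sub_modByMonic p z)
  simp only [eval_mul, eval_sub, eval_X, eval_C, modByMonic_X_sub_C_eq_C_eval] at eval_division
  rw [eq_div_iff (sub_ne_zero.2 hzx)]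
  linear_combination -eval_division

section IterateDivX

variable {R : Type*}

lemma coeff_iterate_divX [Semiring R] (p : R[X]) (i j : ℕ) :
    (divX^[i] p).coeff j = p.coeff (j + i) := by
  induction i generalizing j with
  | zero => rfl
  | succ i ih => rw [Function.iterate_succ_apply', coeff_divX, ih, add_right_comm, add_assoc]

lemma natDegree_iterate_divX [Semiring R] (p : R[X]) (i : ℕ) :
    (divX^[i] p).natDegree = p.natDegree - i := by
  induction i with
  | zero => rfl
  | succ i ih =>
    rw [Function.iterate_succ_apply', natDegree_divX_eq_natDegree_tsub_one, ih, Nat.sub_sub]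

lemma iterate_divX_eq_zero [Semiring R] {p : R[X]} {i : ℕ} (hi : p.natDegree < i) :
    divX^[i] p = 0 := by
  ext j
  rw [coeff_iterate_divX, coeff_zero, coeff_eq_zero_of_natDegree_lt (by lia)]

lemma divByMonic_X_sub_C_eq_sum_iterate_divX [CommRing R] (p : R[X]) (z : R) :
    p /ₘ (X - C z) = ∑ i ∈ Finset.range p.natDegree, z ^ i • divX^[i + 1] p := by
  ext j
  simp only [coeff_divByMonic_X_sub_C, finsetSum_coeff, coeff_smul, coeff_iterate_divX,
    smul_eq_mul]
  have coeff_eq_zero : ∀ i ∈ Finset.range p.natDegree, i ∉ Finset.range (p.natDegree - j) →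
      z ^ i * p.coeff (j + (i + 1)) = 0 := by
    intro i _ hi
    rw [Finset.mem_range] at hi
    rw [coeff_eq_zero_of_natDegree_lt (by lia), mul_zero]
  rw [← Finset.sum_subset (Finset.range_mono (Nat.sub_le _ j)) coeff_eq_zero,
    ← Finset.Ico_add_one_right_eq_Icc, Finset.sum_Ico_eq_sum_range, Nat.add_sub_add_right]
  refine Finset.sum_congr rfl fun i _ ↦ ?_
  rw [Nat.add_sub_cancel_left, show j + 1 + i = j + (i + 1) by ring]

end IterateDivX

section AssociatedPolynomial

variable {R : Type*}

/-- The associated polynomial of `p` with respect to a linear functional `L`: the polynomial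
`z ↦ L ((p(z) - p(x)) / (z - x))`, where `L` acts on the variable `x`. It is encoded by its
coefficients, which makes its degree accessible; see `eval_associatedPolynomial`. -/
def associatedPolynomial [Semiring R] (L : R[X] →ₗ[R] R) (p : R[X]) : R[X] :=
  ∑ i ∈ Finset.range p.natDegree, C (L (divX^[i + 1] p)) * X ^ i

lemma coeff_associatedPolynomial [Semiring R] (L : R[X] →ₗ[R] R) (p : R[X]) (i : ℕ) :
    (associatedPolynomial L p).coeff i = L (divX^[i + 1] p) := by
  simp only [associatedPolynomial, finsetSum_coeff, coeff_C_mul_X_pow, Finset.sum_ite_eq,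
    Finset.mem_range]
  split_ifs with hi
  · rfl
  · rw [iterate_divX_eq_zero (by lia), map_zero]

lemma eval_associatedPolynomial [CommRing R] (L : R[X] →ₗ[R] R) (p : R[X]) (z : R) :
    (associatedPolynomial L p).eval z = L (p /ₘ (X - C z)) := by
  simp only [associatedPolynomial, eval_finsetSum, eval_mul, eval_C, eval_pow, eval_X,
    divByMonic_X_sub_C_eq_sum_iterate_divX, map_sum, map_smul, smul_eq_mul, mul_comm]

variable [Semiring R] {L : R[X] →ₗ[R] R} {k : ℕ}

lemma map_eq_coeff_mul_map_X_pow (hL : ∀ m < k, L (X ^ m) = 0) {f : R[X]}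
    (hf : f.natDegree ≤ k) : L f = f.coeff k * L (X ^ k) := by
  have map_X_pow_eq_zero : ∀ m ∈ Finset.range k, f.coeff m * L (X ^ m) = 0 := fun m hm ↦ by
    rw [hL m (Finset.mem_range.1 hm), mul_zero]
  conv_lhs => rw [f.as_sum_range_C_mul_X_pow' (Nat.lt_succ_of_le hf)]
  simp only [map_sum, ← smul_eq_C_mul, map_smul, smul_eq_mul]
  rw [Finset.sum_range_succ, Finset.sum_eq_zero map_X_pow_eq_zero, zero_add]

lemma map_eq_map_X_pow_of_monic (hL : ∀ m < k, L (X ^ m) = 0) {q : R[X]} (hq : q.Monic)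
    (hqdeg : q.natDegree = k) : L q = L (X ^ k) := by
  rw [map_eq_coeff_mul_map_X_pow hL hqdeg.le, ← hqdeg, hq.coeff_natDegree, one_mul]

lemma coeff_associatedPolynomial_of_le (hL : ∀ m < k, L (X ^ m) = 0) {p : R[X]} {n i : ℕ}
    (hpdeg : p.natDegree ≤ n + k + 1) (hi : n ≤ i) :
    (associatedPolynomial L p).coeff i = p.coeff (k + (i + 1)) * L (X ^ k) := by
  have natDegree_le : (divX^[i + 1] p).natDegree ≤ k := by
    rw [natDegree_iterate_divX]
    lia
  rw [coeff_associatedPolynomial, map_eq_coeff_mul_map_X_pow hL natDegree_le, coeff_iterate_divX]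

variable {p : R[X]} {n : ℕ}

lemma coeff_associatedPolynomial_of_monic (hL : ∀ m < k, L (X ^ m) = 0) (hp : p.Monic)
    (hpdeg : p.natDegree = n + k + 1) : (associatedPolynomial L p).coeff n = L (X ^ k) := by
  rw [coeff_associatedPolynomial_of_le hL hpdeg.le le_rfl,
    show k + (n + 1) = p.natDegree by lia, hp.coeff_natDegree, one_mul]

lemma degree_associatedPolynomial_of_monic (hL : ∀ m < k, L (X ^ m) = 0)
    (hLk : L (X ^ k) ≠ 0) (hp : p.Monic) (hpdeg : p.natDegree = n + k + 1) :
    (associatedPolynomial L p).degree = n := by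
  refine degree_eq_of_le_of_coeff_ne_zero ((degree_le_iff_coeff_zero _ _).2 fun i hi ↦ ?_)
    (by rwa [coeff_associatedPolynomial_of_monic hL hp hpdeg])
  have hi : n < i := WithBot.coe_lt_coe.1 hi
  rw [coeff_associatedPolynomial_of_le hL hpdeg.le hi.le,
    coeff_eq_zero_of_natDegree_lt (by lia), zero_mul]

lemma leadingCoeff_associatedPolynomial_of_monic (hL : ∀ m < k, L (X ^ m) = 0)
    (hLk : L (X ^ k) ≠ 0) (hp : p.Monic) (hpdeg : p.natDegree = n + k + 1) :
    (associatedPolynomial L p).leadingCoeff = L (X ^ k) := by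
  rw [leadingCoeff, natDegree_eq_of_degree_eq_some
    (degree_associatedPolynomial_of_monic hL hLk hp hpdeg),
    coeff_associatedPolynomial_of_monic hL hp hpdeg]

end AssociatedPolynomial

section WeightedIntegral

variable {K : Set ℝ} {μ : Measure ℝ} {w : ℝ → ℝ}

lemma integrableOn_eval_mul (hK : IsCompact K) (hw : IntegrableOn w K μ) (f : ℝ[X]) :
    IntegrableOn (fun x ↦ f.eval x * w x) K μ :=
  hw.continuousOn_mul f.continuous.continuousOn hK

/-- The linear functional `f ↦ ∫ f w dμ` on polynomials, for a weight `w` integrable on the compact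
set `K` of integration. -/
def weightedIntegral (hK : IsCompact K) (hw : IntegrableOn w K μ) : ℝ[X] →ₗ[ℝ] ℝ where
  toFun f := ∫ x in K, f.eval x * w x ∂μ
  map_add' f g := by
    simp only [eval_add, add_mul]
    exact integral_add (integrableOn_eval_mul hK hw f) (integrableOn_eval_mul hK hw g)
  map_smul' a f := by
    simp only [eval_smul, smul_eq_mul, mul_assoc, integral_const_mul, RingHom.id_apply]

lemma weightedIntegral_apply (hK : IsCompact K) (hw : IntegrableOn w K μ) (f : ℝ[X]) :
    weightedIntegral hK hw f = ∫ x in K, f.eval x * w x ∂μ := rfl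

lemma eval_associatedPolynomial_weightedIntegral (hK : IsCompact K) (hw : IntegrableOn w K μ)
    (p : ℝ[X]) {z : ℝ} (hz : z ∉ K) :
    (associatedPolynomial (weightedIntegral hK hw) p).eval z =
      ∫ x in K, (p.eval z - p.eval x) / (z - x) * w x ∂μ := by
  rw [eval_associatedPolynomial, weightedIntegral_apply]
  refine setIntegral_congr_fun hK.measurableSet fun x hx ↦ ?_
  simp only [eval_divByMonic_X_sub_C p (ne_of_mem_of_not_mem hx hz).symm]

end WeightedIntegral

lemma setIntegral_mul_pos {α : Type*} [MeasurableSpace α] {μ : Measure α} {s : Set α}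
    {f w : α → ℝ} (hs : MeasurableSet s) (hf : ∀ x ∈ s, 0 ≤ f x) (hw : ∀ x ∈ s, 0 < w x)
    (hfw : IntegrableOn (fun x ↦ f x * w x) s μ) (hpos : 0 < ∫ x in s, f x ∂μ) :
    0 < ∫ x in s, f x * w x ∂μ := by
  have nonneg : ∀ᵐ x ∂μ.restrict s, 0 ≤ f x * w x :=
    ae_restrict_of_forall_mem hs fun x hx ↦ mul_nonneg (hf x hx) (hw x hx).le
  refine (integral_nonneg_of_ae nonneg).lt_of_ne' fun integral_eq_zero ↦ hpos.ne' ?_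
  have mul_ae_zero := (integral_eq_zero_iff_of_nonneg_ae nonneg hfw).1 integral_eq_zero
  refine integral_eq_zero_of_ae ?_
  filter_upwards [mul_ae_zero, ae_restrict_mem hs] with x hfwx hx
  exact (mul_eq_zero.1 hfwx).resolve_right (hw x hx).ne'

lemma rhoPoly_eval_pos {N : ℕ} (c : Fin N → ℝ) (d : Fin N → ℕ) {x : ℝ}
    (hx : x ∈ Set.Icc (-1 : ℝ) 1) : 0 < (rhoPoly c d).eval x := by
  simp only [rhoPoly, eval_mul, eval_prod, eval_pow, eval_sub, eval_X, eval_C]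
  refine mul_pos (Finset.prod_pos fun j hj ↦ pow_pos ?_ _)
    (Finset.prod_pos fun j hj ↦ pow_pos ?_ _)
  · linarith [hx.1, (Finset.mem_filter.1 hj).2]
  · linarith [hx.2, (Finset.mem_filter.1 hj).2]

lemma setIntegral_sq_mul_rhoPoly_pos {μ : Measure ℝ} [IsFiniteMeasureOnCompacts μ] {N : ℕ}
    (c : Fin N → ℝ) (d : Fin N → ℕ) {q : ℝ[X]}
    (hq : 0 < ∫ x in Set.Icc (-1 : ℝ) 1, q.eval x ^ 2 ∂μ) :
    0 < ∫ x in Set.Icc (-1 : ℝ) 1, q.eval x ^ 2 * (rhoPoly c d).eval x ∂μ := by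
  have integrableOn : IntegrableOn (fun x ↦ q.eval x ^ 2 * (rhoPoly c d).eval x)
      (Set.Icc (-1) 1) μ :=
    (by fun_prop : Continuous _).continuousOn.integrableOn_compact isCompact_Icc
  exact setIntegral_mul_pos measurableSet_Icc (fun x _ ↦ sq_nonneg _)
    (fun x ↦ rhoPoly_eval_pos c d) integrableOn hq

theorem statement5_general {K : Set ℝ} (hK : IsCompact K) {μ : Measure ℝ} {ρ : ℝ → ℝ}
    (hρ : IntegrableOn ρ K μ) {p q : ℝ[X]} {n k : ℕ}
    (hp : p.Monic) (hpdeg : p.natDegree = n + k + 1)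
    (hq : q.Monic) (hqdeg : q.natDegree = k)
    (hqorth : ∀ m < k, ∫ x in K, x ^ m * q.eval x * ρ x ∂μ = 0)
    (hqnorm : ∫ x in K, q.eval x ^ 2 * ρ x ∂μ ≠ 0) :
    ∃ T : ℝ[X], T.degree = n ∧ T.leadingCoeff = ∫ x in K, q.eval x ^ 2 * ρ x ∂μ ∧
      ∀ z ∉ K, T.eval z =
        ∫ x in K, (p.eval z - p.eval x) / (z - x) * (q.eval x * ρ x) ∂μ := by
  set L := weightedIntegral hK (integrableOn_eval_mul hK hρ q)
  have map_X_pow_eq_zero : ∀ m < k, L (X ^ m) = 0 := fun m hm ↦ by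
    simpa only [L, weightedIntegral_apply, eval_pow, eval_X, ← mul_assoc] using hqorth m hm
  have map_X_pow : L (X ^ k) = ∫ x in K, q.eval x ^ 2 * ρ x ∂μ := by
    rw [← map_eq_map_X_pow_of_monic map_X_pow_eq_zero hq hqdeg]
    simp only [L, weightedIntegral_apply, ← mul_assoc, pow_two]
  rw [← map_X_pow] at hqnorm ⊢
  exact ⟨associatedPolynomial L p,
    degree_associatedPolynomial_of_monic map_X_pow_eq_zero hqnorm hp hpdeg,
    leadingCoeff_associatedPolynomial_of_monic map_X_pow_eq_zero hqnorm hp hpdeg,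
    fun z hz ↦ eval_associatedPolynomial_weightedIntegral hK _ p hz⟩

/-- For `k ≥ 1` and `n ≥ 0`, the `k`-th associated polynomial
`S_n^{[k]}` is a polynomial of degree exactly `n` with leading coefficient
`∫ Q_{k-1}² dμ_ρ`. -/
theorem statement5
    (μ : Measure ℝ) [IsFiniteMeasure μ]
    (hμsupp : μ (Set.Icc (-1:ℝ) 1)ᶜ = 0)
    (hμinf : ∀ p : Polynomial ℝ, p ≠ 0 → 0 < ∫ x in Set.Icc (-1:ℝ) 1, (p.eval x) ^ 2 ∂μ)
    {N : ℕ} (c : Fin N → ℝ) (d : Fin N → ℕ)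
    (hc : ∀ j, c j ∉ Set.Icc (-1:ℝ) 1)
    (η : Fin N → ℕ → ℝ) (hη : ∀ j i, i ≤ d j → 0 ≤ η j i) (hηd : ∀ j, 0 < η j (d j))
    (S : ℕ → Polynomial ℝ)
    (hSmonic : ∀ n, (S n).Monic) (hSdeg : ∀ n, (S n).natDegree = n)
    (hSorth : ∀ n, ∀ m < n, sobInner2 μ c d η (X ^ m) (S n) = 0)
    (Q : ℕ → Polynomial ℝ)
    (hQmonic : ∀ n, (Q n).Monic) (hQdeg : ∀ n, (Q n).natDegree = n)
    (hQorth : ∀ n, ∀ m < n,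
      (∫ x in Set.Icc (-1:ℝ) 1, x ^ m * (Q n).eval x * (rhoPoly c d).eval x ∂μ) = 0)
    (k : ℕ) (hk : 1 ≤ k) (n : ℕ) :
    ∃ T : Polynomial ℝ,
      T.degree = (n : ℕ) ∧
      T.leadingCoeff =
        (∫ x in Set.Icc (-1:ℝ) 1, ((Q (k - 1)).eval x) ^ 2 * (rhoPoly c d).eval x ∂μ) ∧
      ∀ z : ℝ, z ∉ Set.Icc (-1:ℝ) 1 →
        T.eval z = ∫ x in Set.Icc (-1:ℝ) 1,
          (((S (n + k)).eval z - (S (n + k)).eval x) / (z - x)) *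
            ((Q (k - 1)).eval x * (rhoPoly c d).eval x) ∂μ :=
  statement5_general isCompact_Icc
    ((rhoPoly c d).continuous.continuousOn.integrableOn_compact isCompact_Icc)
    (hSmonic (n + k)) ((hSdeg (n + k)).trans (by lia)) (hQmonic (k - 1)) (hQdeg (k - 1))
    (hQorth (k - 1)) (setIntegral_sq_mul_rhoPoly_pos c d (hμinf _ (hQmonic _).ne_zero)).ne'

end
end

section
/- Recurrence relation for the associated polynomials: for every k ≥ 0 and every n ≥ 2d − 1, ρ(z) · S_n^{[k]}(z) = Σ_{j=n−d}^{n+d} 𝔞_{n+k, j+k} · S_j^{[k]}(z) holds identically in z, where 𝔞_{n+k, j+k} = ⟨S_{n+k}, ρ S_{j+k}⟩ / ⟨S_{j+k}, S_{j+k}⟩ and d = deg ρ. -/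
open MeasureTheory Polynomial Filter
open scoped Classical

noncomputable section

/-!
The factor `ρ` annihilates every point-mass term of the Sobolev form `B`, so
`B f (ρ g) = ∫ f ρ g dμ` and multiplication by `ρ` is self-adjoint for `B`. Expanding
`ρ Sₘ` in the orthogonal basis `(Sⱼ)`, the coefficients are `B (ρ Sₘ) Sⱼ = B Sₘ (ρ Sⱼ)`, and
comparing degrees on both sides leaves only `|j - m| ≤ deg ρ`.

The associated functions arise by applying the functional
`Λ p = ∫ (p(z) - p(x)) / (z - x) q(x) ρ(x) dμ(x)` to this expansion. By the product rule for
difference quotients, `Λ (ρ Sₘ)` differs from `ρ(z) Λ Sₘ` by `∫ Sₘ (ρ(z) - ρ(x)) / (z - x) q ρ dμ`,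
which is `B Sₘ (ρ h)` for a polynomial `h` with `deg (ρ h) ≤ 2 deg ρ - 1 + deg q`; it vanishes once
this bound is below `m`.
-/

section OrthogonalExpansion

variable {K V ι : Type*} [Field K] [AddCommGroup V] [Module K V]

lemma repr_eq_div_of_isOrthoᵢ {B : LinearMap.BilinForm K V} (b : Module.Basis ι K V)
    (hb : B.IsOrthoᵢ b) {i : ι} (hi : B (b i) (b i) ≠ 0) (x : V) :
    b.repr x i = B x (b i) / B (b i) (b i) := by
  have flip_eq_smul_coord : B.flip (b i) = B (b i) (b i) • b.coord i := b.ext fun j => by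
    rcases eq_or_ne j i with rfl | hji
    · simp
    · simp [LinearMap.isOrthoᵢ_def.1 hb j i hji, hji]
  rw [eq_div_iff hi, mul_comm]
  exact (LinearMap.congr_fun flip_eq_smul_coord x).symm

lemma eq_sum_of_isOrthoᵢ {B : LinearMap.BilinForm K V} (b : Module.Basis ι K V)
    (hb : B.IsOrthoᵢ b) (hne : ∀ i, B (b i) (b i) ≠ 0) {x : V} {s : Finset ι}
    (hs : ∀ i ∉ s, B x (b i) = 0) :
    x = ∑ i ∈ s, (B x (b i) / B (b i) (b i)) • b i := by
  have support_subset : (b.repr x).support ⊆ s := fun i hi => by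
    by_contra his
    rw [Finsupp.mem_support_iff, repr_eq_div_of_isOrthoᵢ b hb (hne i), hs i his, zero_div] at hi
    exact hi rfl
  calc
    x = ∑ i ∈ s, b.repr x i • b i := by
      conv_lhs => rw [← b.linearCombination_repr x, Finsupp.linearCombination_apply]
      exact Finsupp.sum_of_support_subset _ support_subset _ fun _ _ => zero_smul K _
    _ = ∑ i ∈ s, (B x (b i) / B (b i) (b i)) • b i := by
      simp only [repr_eq_div_of_isOrthoᵢ b hb (hne _)]

end OrthogonalExpansion

lemma map_eq_zero_of_natDegree_lt {R M : Type*} [CommRing R] [AddCommGroup M] [Module R M]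
    {φ : R[X] →ₗ[R] M} {n : ℕ} (hφ : ∀ m < n, φ (X ^ m) = 0) {p : R[X]} (hp : p.natDegree < n) :
    φ p = 0 := by
  have degreeLT_le_ker : degreeLT R n ≤ LinearMap.ker φ := by
    rw [degreeLT_eq_span_X_pow, Submodule.span_le]
    intro q hq
    simp only [Finset.coe_image, Finset.coe_range, Set.mem_image, Set.mem_Iio] at hq
    obtain ⟨m, hm, rfl⟩ := hq
    exact hφ m hm
  exact degreeLT_le_ker (mem_degreeLT.2 (degree_le_natDegree.trans_lt (Nat.cast_lt.2 hp)))

section DifferenceQuotient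

variable {R : Type*} [CommRing R]

lemma X_sub_C_mul_divByMonic_X_sub_C (z : R) (p : R[X]) :
    (X - C z) * (p /ₘ (X - C z)) = p - C (p.eval z) := by
  rw [X_sub_C_mul_divByMonic_eq_sub_modByMonic, modByMonic_X_sub_C_eq_C_eval]

/-- The difference quotient `x ↦ (p(z) - p(x)) / (z - x)` of a polynomial `p`, as a linear map in
`p`. It is encoded as the quotient of `p` by `X - z`, hence is a polynomial also at `x = z`. -/
def diffQuot (z : R) : R[X] →ₗ[R] R[X] where
  toFun p := p /ₘ (X - C z)
  map_add' p q := (monic_X_sub_C z).isRegular.left <| by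
    simp only [mul_add, X_sub_C_mul_divByMonic_X_sub_C, eval_add, C_add]
    ring
  map_smul' a p := (monic_X_sub_C z).isRegular.left <| by
    simp only [RingHom.id_apply, mul_smul_comm, X_sub_C_mul_divByMonic_X_sub_C, eval_smul,
      smul_sub, smul_eq_mul, smul_C]

lemma X_sub_C_mul_diffQuot (z : R) (p : R[X]) : (X - C z) * diffQuot z p = p - C (p.eval z) :=
  X_sub_C_mul_divByMonic_X_sub_C z p

lemma sub_mul_eval_diffQuot (z x : R) (p : R[X]) :
    (z - x) * (diffQuot z p).eval x = p.eval z - p.eval x := by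
  have h := congrArg (eval x) (X_sub_C_mul_diffQuot z p)
  simp only [eval_mul, eval_sub, eval_X, eval_C] at h
  linear_combination -h

lemma diffQuot_mul (z : R) (p q : R[X]) :
    diffQuot z (p * q) = C (p.eval z) * diffQuot z q + q * diffQuot z p :=
  (monic_X_sub_C z).isRegular.left <| by
    simp only [X_sub_C_mul_diffQuot, eval_mul, C_mul]
    linear_combination -C (p.eval z) * X_sub_C_mul_diffQuot z q - q * X_sub_C_mul_diffQuot z p

lemma natDegree_diffQuot [Nontrivial R] (z : R) (p : R[X]) :
    (diffQuot z p).natDegree = p.natDegree - 1 := by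
  rw [← natDegree_X_sub_C z]
  exact natDegree_divByMonic p (monic_X_sub_C z)

lemma diffQuot_eq_zero_of_natDegree_eq_zero (z : R) {p : R[X]} (hp : p.natDegree = 0) :
    diffQuot z p = 0 :=
  (monic_X_sub_C z).isRegular.left <| by
    beta_reduce
    rw [X_sub_C_mul_diffQuot, eq_C_of_natDegree_eq_zero hp, eval_C, sub_self, mul_zero]

/-- The associated functional `p ↦ L ((p(z) - p) / (z - ·) · w)` of a linear functional `L` with
weight `w`. For `L` the integral against `μ`, `w = Q_{k-1} ρ` and `p = S_{n+k}` its value is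
`S_n^{[k]}(z)`. -/
def assocFunctional (L : R[X] →ₗ[R] R) (w : R[X]) (z : R) : R[X] →ₗ[R] R :=
  L ∘ₗ LinearMap.mulRight R w ∘ₗ diffQuot z

lemma assocFunctional_apply (L : R[X] →ₗ[R] R) (w : R[X]) (z : R) (p : R[X]) :
    assocFunctional L w z p = L (diffQuot z p * w) :=
  rfl

lemma assocFunctional_mul (L : R[X] →ₗ[R] R) (w : R[X]) (z : R) (p q : R[X]) :
    assocFunctional L w z (p * q) =
      p.eval z * assocFunctional L w z q + L (q * (diffQuot z p * w)) := by
  rw [assocFunctional_apply, assocFunctional_apply, diffQuot_mul, add_mul, map_add, mul_assoc,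
    ← smul_eq_C_mul, map_smul, smul_eq_mul, mul_assoc]

end DifferenceQuotient

section LowerDegreeOrthogonality

variable {R : Type*} [CommRing R] {B : LinearMap.BilinForm R R[X]} {S : Sequence R} {ρ : R[X]}

lemma isOrthoᵢ_of_isSymm (hB : B.IsSymm) (hS : ∀ n, ∀ m < n, B (X ^ m) (S n) = 0) :
    B.IsOrthoᵢ S := by
  have apply_eq_zero_of_lt {i j : ℕ} (hij : i < j) : B (S i) (S j) = 0 :=
    map_eq_zero_of_natDegree_lt (φ := B.flip (S j)) (hS j) (by simpa using hij)
  refine LinearMap.isOrthoᵢ_def.2 fun i j hij => ?_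
  rcases lt_or_gt_of_ne hij with hlt | hgt
  · exact apply_eq_zero_of_lt hlt
  · rw [hB.eq, apply_eq_zero_of_lt hgt]

lemma mul_apply_eq_zero_of_add_lt (hS : ∀ n, ∀ m < n, B (X ^ m) (S n) = 0) {i j : ℕ}
    (hij : ρ.natDegree + i < j) : B (ρ * S i) (S j) = 0 := by
  refine map_eq_zero_of_natDegree_lt (φ := B.flip (S j)) (hS j) (natDegree_mul_le.trans_lt ?_)
  rwa [S.natDegree_eq]

lemma assocFunctional_mul_eq_eval_mul [Nontrivial R] {L : R[X] →ₗ[R] R} (hB : B.IsSymm)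
    (hBL : ∀ f g, B f (ρ * g) = L (f * (ρ * g))) {m : ℕ} {s : R[X]}
    (hs : ∀ i < m, B (X ^ i) s = 0) {q : R[X]} (hq : 2 * ρ.natDegree + q.natDegree ≤ m) (z : R) :
    assocFunctional L (q * ρ) z (ρ * s) = ρ.eval z * assocFunctional L (q * ρ) z s := by
  suffices remainder_eq_zero : L (s * (ρ * (diffQuot z ρ * q))) = 0 by
    rw [assocFunctional_mul, ← mul_assoc (diffQuot z ρ), mul_comm (_ * q),
      remainder_eq_zero, add_zero]
  rcases Nat.eq_zero_or_pos ρ.natDegree with hρ | hρ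
  · rw [diffQuot_eq_zero_of_natDegree_eq_zero z hρ, zero_mul, mul_zero, mul_zero, map_zero]
  · rw [← hBL, hB.eq]
    refine map_eq_zero_of_natDegree_lt (φ := B.flip s) hs ?_
    calc
      (ρ * (diffQuot z ρ * q)).natDegree
          ≤ ρ.natDegree + ((diffQuot z ρ).natDegree + q.natDegree) :=
        natDegree_mul_le.trans (Nat.add_le_add_left natDegree_mul_le _)
      _ < m := by rw [natDegree_diffQuot]; omega

end LowerDegreeOrthogonality

section Recurrence

variable {K : Type*} [Field K] {B : LinearMap.BilinForm K K[X]} {S : Sequence K} {ρ : K[X]}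

theorem mul_eq_sum_Icc (hB : B.IsSymm) (hS : ∀ n, ∀ m < n, B (X ^ m) (S n) = 0)
    (hne : ∀ n, B (S n) (S n) ≠ 0) (hρ : ∀ f g, B (ρ * f) g = B f (ρ * g)) (m : ℕ) :
    ρ * S m = ∑ j ∈ Finset.Icc (m - ρ.natDegree) (m + ρ.natDegree),
      (B (S m) (ρ * S j) / B (S j) (S j)) • S j := by
  let b := S.basis fun i => (leadingCoeff_ne_zero.2 (S.ne_zero i)).isUnit
  have coe_b : ⇑b = S := funext fun i => S.basis_eq_self _ i
  have outside_Icc (j : ℕ) (hj : j ∉ Finset.Icc (m - ρ.natDegree) (m + ρ.natDegree)) :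
      B (ρ * S m) (S j) = 0 := by
    rcases lt_or_ge (ρ.natDegree + m) j with hlt | hge
    · exact mul_apply_eq_zero_of_add_lt hS hlt
    · rw [Finset.mem_Icc] at hj
      rw [hρ, ← hB.eq]
      exact mul_apply_eq_zero_of_add_lt hS (by omega)
  have expansion := eq_sum_of_isOrthoᵢ b (B := B) (x := ρ * S m)
    (by rw [coe_b]; exact isOrthoᵢ_of_isSymm hB hS) (by rwa [coe_b]) (by rwa [coe_b])
  simpa only [coe_b, hρ] using expansion

lemma map_mul_eq_sum_Icc_add (hB : B.IsSymm) (hS : ∀ n, ∀ m < n, B (X ^ m) (S n) = 0)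
    (hne : ∀ n, B (S n) (S n) ≠ 0) (hρ : ∀ f g, B (ρ * f) g = B f (ρ * g))
    (Λ : K[X] →ₗ[K] K) {n : ℕ} (hn : ρ.natDegree ≤ n) (k : ℕ) :
    Λ (ρ * S (n + k)) = ∑ j ∈ Finset.Icc (n - ρ.natDegree) (n + ρ.natDegree),
      (B (S (n + k)) (ρ * S (j + k)) / B (S (j + k)) (S (j + k))) * Λ (S (j + k)) := by
  have shift_Icc : Finset.Icc (n + k - ρ.natDegree) (n + k + ρ.natDegree) =
      (Finset.Icc (n - ρ.natDegree) (n + ρ.natDegree)).map (addRightEmbedding k) := by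
    rw [Finset.map_add_right_Icc, Nat.sub_add_comm hn, Nat.add_right_comm]
  rw [mul_eq_sum_Icc hB hS hne hρ, shift_Icc, Finset.sum_map, map_sum]
  simp only [map_smul, smul_eq_mul, addRightEmbedding_apply]

end Recurrence

section SobolevForm

/-- Integration of real polynomials over a compact set, as a linear functional. -/
def integralFunctional (μ : Measure ℝ) [IsFiniteMeasureOnCompacts μ] (s : Set ℝ)
    (hs : IsCompact s) : ℝ[X] →ₗ[ℝ] ℝ where
  toFun p := ∫ x in s, p.eval x ∂μ
  map_add' p q := by
    simp only [eval_add]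
    exact integral_add (p.continuous.continuousOn.integrableOn_compact hs)
      (q.continuous.continuousOn.integrableOn_compact hs)
  map_smul' a p := by
    simp only [eval_smul, smul_eq_mul, RingHom.id_apply]
    exact integral_const_mul _ _

lemma integralFunctional_apply (μ : Measure ℝ) [IsFiniteMeasureOnCompacts μ] (s : Set ℝ)
    (hs : IsCompact s) (p : ℝ[X]) : integralFunctional μ s hs p = ∫ x in s, p.eval x ∂μ :=
  rfl

lemma assocFunctional_integralFunctional (μ : Measure ℝ) [IsFiniteMeasureOnCompacts μ] (s : Set ℝ)
    (hs : IsCompact s) (w p : ℝ[X]) {z : ℝ} (hz : ∀ᵐ x ∂μ.restrict s, x ≠ z) :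
    assocFunctional (integralFunctional μ s hs) w z p =
      ∫ x in s, (p.eval z - p.eval x) / (z - x) * w.eval x ∂μ := by
  rw [assocFunctional_apply, integralFunctional_apply]
  refine integral_congr_ae (hz.mono fun x hx => ?_)
  dsimp only
  rw [eval_mul, ← sub_mul_eval_diffQuot, mul_div_cancel_left₀ _ (sub_ne_zero.2 hx.symm)]

variable (μ : Measure ℝ) {N : ℕ} (c : Fin N → ℝ) (d : Fin N → ℕ) (η : Fin N → ℕ → ℝ)

/-- The discrete Sobolev inner product `sobInner2` as a bilinear form on polynomials. -/
def sobolevForm [IsFiniteMeasureOnCompacts μ] : LinearMap.BilinForm ℝ ℝ[X] :=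
  (LinearMap.mul ℝ ℝ[X]).compr₂ (integralFunctional μ (Set.Icc (-1) 1) isCompact_Icc) +
    ∑ j, ∑ i ∈ Finset.range (d j + 1), η j i •
      LinearMap.BilinForm.linMulLin (leval (c j) ∘ₗ derivative ^ i) (leval (c j) ∘ₗ derivative ^ i)

lemma sobolevForm_apply [IsFiniteMeasureOnCompacts μ] (f g : ℝ[X]) :
    sobolevForm μ c d η f g = sobInner2 μ c d η f g := by
  simp [sobolevForm, sobInner2, integralFunctional_apply, LinearMap.sum_apply,
    Module.End.pow_apply, mul_assoc]

lemma sobolevForm_isSymm [IsFiniteMeasureOnCompacts μ] : (sobolevForm μ c d η).IsSymm := by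
  refine ⟨fun f g => ?_⟩
  simp only [sobolevForm_apply, sobInner2, mul_comm (eval _ f), mul_assoc,
    mul_comm (eval _ (derivative^[_] f))]

variable {μ c d η}

lemma sobInner2_self_pos (hη : ∀ j i, i ≤ d j → 0 ≤ η j i) {p : ℝ[X]}
    (hp : 0 < ∫ x in Set.Icc (-1 : ℝ) 1, p.eval x ^ 2 ∂μ) : 0 < sobInner2 μ c d η p p := by
  simp only [sq] at hp
  refine add_pos_of_pos_of_nonneg hp
    (Finset.sum_nonneg fun j _ => Finset.sum_nonneg fun i hi => ?_)
  rw [mul_assoc]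
  exact mul_nonneg (hη j i (Finset.mem_range_succ_iff.1 hi)) (mul_self_nonneg _)

variable (d)

lemma associated_rhoPoly (hc : ∀ j, c j ∉ Set.Icc (-1 : ℝ) 1) :
    Associated (rhoPoly c d) (∏ j, (X - C (c j)) ^ (d j + 1)) := by
  have filter_right : Finset.univ.filter (fun j => 1 < c j) =
      Finset.univ.filter (fun j => ¬ c j < -1) := by
    refine Finset.filter_congr fun j _ => ⟨fun h => by linarith, fun h => ?_⟩
    by_contra hle
    exact hc j ⟨not_lt.1 h, not_lt.1 hle⟩
  have C_sub_X_associated (j : Fin N) : Associated (C (c j) - X) (X - C (c j)) := by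
    rw [← neg_sub]
    exact (Associated.refl _).neg_left
  rw [rhoPoly, filter_right,
    ← Finset.prod_filter_mul_prod_filter_not Finset.univ (fun j => c j < -1)]
  exact Associated.mul_left _ (Associated.prod _ _ _ fun j _ => (C_sub_X_associated j).pow_pow)

lemma natDegree_rhoPoly (hc : ∀ j, c j ∉ Set.Icc (-1 : ℝ) 1) :
    (rhoPoly c d).natDegree = N + ∑ j, d j := by
  rw [natDegree_eq_natDegree (degree_eq_degree_of_associated (associated_rhoPoly d hc)),
    natDegree_prod_of_monic _ _ fun j _ => (monic_X_sub_C (c j)).pow (d j + 1)]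
  simp [Finset.sum_add_distrib, add_comm]

lemma eval_iterate_derivative_rhoPoly_mul (hc : ∀ j, c j ∉ Set.Icc (-1 : ℝ) 1) {j : Fin N} {i : ℕ}
    (hi : i ≤ d j) (f : ℝ[X]) : (derivative^[i] (rhoPoly c d * f)).eval (c j) = 0 := by
  have pow_dvd : (X - C (c j)) ^ (d j + 1) ∣ rhoPoly c d * f :=
    dvd_mul_of_dvd_left
      ((Finset.dvd_prod_of_mem _ (Finset.mem_univ j)).trans (associated_rhoPoly d hc).dvd') f
  rw [← IsRoot, ← dvd_iff_isRoot]
  exact (dvd_pow_self _ (by omega)).trans (pow_sub_dvd_iterate_derivative_of_pow_dvd i pow_dvd)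

lemma sobolevForm_rhoPoly_mul [IsFiniteMeasureOnCompacts μ] (hc : ∀ j, c j ∉ Set.Icc (-1 : ℝ) 1)
    (f g : ℝ[X]) :
    sobolevForm μ c d η f (rhoPoly c d * g) =
      integralFunctional μ (Set.Icc (-1) 1) isCompact_Icc (f * (rhoPoly c d * g)) := by
  rw [sobolevForm_apply, sobInner2, integralFunctional_apply, add_eq_left.2]
  · simp only [eval_mul]
  · refine Finset.sum_eq_zero fun j _ => Finset.sum_eq_zero fun i hi => ?_
    rw [eval_iterate_derivative_rhoPoly_mul d hc (Finset.mem_range_succ_iff.1 hi), mul_zero]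

lemma sobolevForm_rhoPoly_mul_left [IsFiniteMeasureOnCompacts μ]
    (hc : ∀ j, c j ∉ Set.Icc (-1 : ℝ) 1) (f g : ℝ[X]) :
    sobolevForm μ c d η (rhoPoly c d * f) g = sobolevForm μ c d η f (rhoPoly c d * g) := by
  rw [← (sobolevForm_isSymm μ c d η).eq, sobolevForm_rhoPoly_mul d hc,
    sobolevForm_rhoPoly_mul d hc, mul_left_comm, mul_comm g, mul_left_comm]

end SobolevForm

theorem statement6_general
    (μ : Measure ℝ) [IsFiniteMeasureOnCompacts μ]
    {N : ℕ} (c : Fin N → ℝ) (d : Fin N → ℕ) (hc : ∀ j, c j ∉ Set.Icc (-1 : ℝ) 1)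
    (η : Fin N → ℕ → ℝ)
    (S : ℕ → ℝ[X]) (hSdeg : ∀ n, (S n).degree = n)
    (hSorth : ∀ n, ∀ m < n, sobInner2 μ c d η (X ^ m) (S n) = 0)
    (hSnorm : ∀ n, sobInner2 μ c d η (S n) (S n) ≠ 0)
    (Q : ℕ → ℝ[X]) (hQdeg : ∀ n, (Q n).natDegree ≤ n)
    (Sk : ℕ → ℕ → ℝ → ℝ)
    (hSk0 : ∀ n z, Sk 0 n z = (S n).eval z)
    (hSkS : ∀ k n z, Sk (k + 1) n z =
      ∫ x in Set.Icc (-1 : ℝ) 1,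
        (((S (n + k + 1)).eval z - (S (n + k + 1)).eval x) / (z - x)) *
          ((Q k).eval x * (rhoPoly c d).eval x) ∂μ)
    (k n : ℕ) (hn : 2 * (N + ∑ j, d j) ≤ n + 1)
    (z : ℝ) (hz : ∀ᵐ x ∂μ.restrict (Set.Icc (-1) 1), x ≠ z) :
    (rhoPoly c d).eval z * Sk k n z =
      ∑ j ∈ Finset.Icc (n - (N + ∑ j, d j)) (n + (N + ∑ j, d j)),
        (sobInner2 μ c d η (S (n + k)) (rhoPoly c d * S (j + k)) /
            sobInner2 μ c d η (S (j + k)) (S (j + k))) * Sk k j z := by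
  have hsymm := sobolevForm_isSymm μ c d η
  simp only [← natDegree_rhoPoly d hc, ← sobolevForm_apply] at hn hSorth hSnorm ⊢
  suffices exists_functional : ∃ Λ : ℝ[X] →ₗ[ℝ] ℝ, (∀ j, Sk k j z = Λ (S (j + k))) ∧
      Λ (rhoPoly c d * S (n + k)) = (rhoPoly c d).eval z * Λ (S (n + k)) by
    obtain ⟨Λ, hSk, hΛ⟩ := exists_functional
    simp only [hSk, ← hΛ]
    exact map_mul_eq_sum_Icc_add (S := ⟨S, hSdeg⟩) hsymm hSorth hSnorm
      (sobolevForm_rhoPoly_mul_left d hc) Λ (by omega) k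
  cases k with
  | zero => exact ⟨leval z, fun j => hSk0 j z, eval_mul⟩
  | succ k =>
    refine ⟨assocFunctional (integralFunctional μ (Set.Icc (-1) 1) isCompact_Icc)
      (Q k * rhoPoly c d) z, fun j => ?_, ?_⟩
    · simp only [hSkS, assocFunctional_integralFunctional μ _ isCompact_Icc _ _ hz, eval_mul,
        add_assoc]
    · exact assocFunctional_mul_eq_eval_mul hsymm (sobolevForm_rhoPoly_mul d hc) (hSorth _)
        (by have := hQdeg k; omega) z

/-- The `2d+1`-term recurrence relation
`ρ(z) S_n^{[k]}(z) = ∑_{j=n-d}^{n+d} 𝔞_{n+k,j+k} S_j^{[k]}(z)` for `n ≥ 2d - 1`. -/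
theorem statement6
    (μ : Measure ℝ) [IsFiniteMeasure μ]
    (hμsupp : μ (Set.Icc (-1:ℝ) 1)ᶜ = 0)
    (hμinf : ∀ p : Polynomial ℝ, p ≠ 0 → 0 < ∫ x in Set.Icc (-1:ℝ) 1, (p.eval x) ^ 2 ∂μ)
    {N : ℕ} (c : Fin N → ℝ) (d : Fin N → ℕ)
    (hc : ∀ j, c j ∉ Set.Icc (-1:ℝ) 1)
    (η : Fin N → ℕ → ℝ) (hη : ∀ j i, i ≤ d j → 0 ≤ η j i) (hηd : ∀ j, 0 < η j (d j))
    (S : ℕ → Polynomial ℝ)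
    (hSmonic : ∀ n, (S n).Monic) (hSdeg : ∀ n, (S n).natDegree = n)
    (hSorth : ∀ n, ∀ m < n, sobInner2 μ c d η (X ^ m) (S n) = 0)
    (Q : ℕ → Polynomial ℝ)
    (hQmonic : ∀ n, (Q n).Monic) (hQdeg : ∀ n, (Q n).natDegree = n)
    (hQorth : ∀ n, ∀ m < n,
      (∫ x in Set.Icc (-1:ℝ) 1, x ^ m * (Q n).eval x * (rhoPoly c d).eval x ∂μ) = 0)
    (Sk : ℕ → ℕ → ℝ → ℝ)
    (hSk0 : ∀ n z, Sk 0 n z = (S n).eval z)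
    (hSkS : ∀ k n z, Sk (k + 1) n z =
      ∫ x in Set.Icc (-1:ℝ) 1,
        (((S (n + k + 1)).eval z - (S (n + k + 1)).eval x) / (z - x)) *
          ((Q k).eval x * (rhoPoly c d).eval x) ∂μ)
    (k n : ℕ) (hn : 2 * (N + ∑ j, d j) ≤ n + 1) :
    ∀ z : ℝ, z ∉ Set.Icc (-1:ℝ) 1 →
      (rhoPoly c d).eval z * Sk k n z =
        ∑ j ∈ Finset.Icc (n - (N + ∑ j, d j)) (n + (N + ∑ j, d j)),
          (sobInner2 μ c d η (S (n + k)) (rhoPoly c d * S (j + k)) /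
              sobInner2 μ c d η (S (j + k)) (S (j + k))) * Sk k j z := by
  intro z hz
  exact statement6_general μ c d hc η S
    (fun n => by rw [degree_eq_natDegree (hSmonic n).ne_zero, hSdeg]) hSorth
    (fun n => (sobInner2_self_pos hη (hμinf _ (hSmonic n).ne_zero)).ne') Q (fun n => (hQdeg n).le)
    Sk hSk0 hSkS k n hn z
    (ae_restrict_of_forall_mem measurableSet_Icc fun _ hx hxz => hz (hxz ▸ hx))

end
end

section
/- Let L be a polynomial with real coefficients of degree at least m ∈ ℕ, let Δ_0, Δ_1, …, Δ_m be intervals of the real line, and set I_k = conv(Δ_0 ∪ ⋯ ∪ Δ_k) for k = 0,…,m. If I_{k−1} ∩ Δ_k = ∅ for every k = 1,…,m, then Σ_{i=0}^{m} N₀(L^{(i)}; Δ_i) ≤ N₀(L^{(m)}; I_m) + m ≤ deg L, where N₀(f; A) denotes the total number of zeros, counted with multiplicity, of the polynomial f in the set A ⊂ ℝ, and L^{(i)} is the ith derivative of L. -/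
open MeasureTheory Polynomial Filter
open scoped Classical

noncomputable section

/-!
By Rolle's theorem, passing from `f` to `f'` loses at most one zero on an interval, multiplicities
included. So `L^(k+1)` has at most one zero fewer in the interval `I k` than `L^(k)`, and since
`Δ (k + 1)` is disjoint from `I k`, its zeros in `Δ (k + 1)` are further zeros in `I (k + 1)`.
Starting from `I 0 ⊇ Δ 0`, at most `m` zeros are lost in `m` steps, and `L^(m)` has at most
`deg L - m` zeros in all.
-/

theorem card_le_card_add_one_of_interleaved {α : Type*} [LinearOrder α] {s t : Multiset α}
    (hcount : ∀ x ∈ s, s.count x ≤ t.count x + 1)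
    (hinter : ∀ᵉ (x ∈ s) (y ∈ s),
      x < y → (∀ z ∈ s, z ∉ Set.Ioo x y) → ∃ z ∈ t, x < z ∧ z < y) :
    s.card ≤ t.card + 1 := by
  have hdistinct : s.toFinset.card ≤ (t.toFinset \ s.toFinset).card + 1 := by
    refine Finset.card_le_sdiff_of_interleaved ?_
    simpa only [Multiset.mem_toFinset] using hinter
  have hnew : (t.toFinset \ s.toFinset).card ≤ ∑ x ∈ t.toFinset \ s.toFinset, t.count x := by
    simpa only [smul_eq_mul, mul_one] using Finset.card_nsmul_le_sum _ _ 1 fun x hx =>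
      Multiset.one_le_count_iff_mem.2 (Multiset.mem_toFinset.1 (Finset.mem_sdiff.1 hx).1)
  calc s.card = ∑ x ∈ s.toFinset, s.count x := (Multiset.toFinset_sum_count_eq s).symm
    _ ≤ ∑ x ∈ s.toFinset, (t.count x + 1) :=
        Finset.sum_le_sum fun x hx => hcount x (Multiset.mem_toFinset.1 hx)
    _ = ∑ x ∈ s.toFinset, t.count x + s.toFinset.card := by
        rw [Finset.sum_add_distrib, Finset.card_eq_sum_ones]
    _ ≤ ∑ x ∈ s.toFinset, t.count x + ∑ x ∈ t.toFinset \ s.toFinset, t.count x + 1 := by lia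
    _ = ∑ x ∈ s.toFinset ∪ t.toFinset, t.count x + 1 := by
        rw [← Finset.sum_union Finset.disjoint_sdiff, Finset.union_sdiff_self_eq_union]
    _ = t.card + 1 := by
        rw [Multiset.sum_count_eq_card fun x hx =>
          Finset.mem_union_right _ (Multiset.mem_toFinset.2 hx)]

section N0

variable (p : ℝ[X]) {A B : Set ℝ}

theorem N0_mono (hAB : A ⊆ B) : N0 p A ≤ N0 p B :=
  Multiset.card_le_card (Multiset.monotone_filter_right _ fun _ hx => hAB hx)

theorem N0_union (hAB : Disjoint A B) : N0 p (A ∪ B) = N0 p A + N0 p B := by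
  have hinter : p.roots.filter (fun x => x ∈ A ∧ x ∈ B) = 0 :=
    Multiset.filter_eq_nil.2 fun x _ hx => Set.disjoint_left.1 hAB hx.1 hx.2
  simp only [N0, Set.mem_union]
  rw [← Multiset.card_add, Multiset.filter_add_filter, hinter, add_zero]

theorem N0_le_natDegree (A : Set ℝ) : N0 p A ≤ p.natDegree :=
  (Multiset.card_le_card (Multiset.filter_le _ _)).trans p.card_roots'

theorem N0_le_N0_derivative_add_one (hA : A.OrdConnected) :
    N0 p A ≤ N0 (derivative p) A + 1 := by
  rcases eq_or_ne (derivative p) 0 with hp' | hp'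
  · rw [eq_C_of_derivative_eq_zero hp']
    simp [N0]
  have hp : p ≠ 0 := ne_of_apply_ne derivative (by rwa [derivative_zero])
  refine card_le_card_add_one_of_interleaved (fun x hx => ?_) fun x hx y hy hxy _ => ?_
  · have hxA := (Multiset.mem_filter.1 hx).2
    rw [Multiset.count_filter_of_pos hxA, Multiset.count_filter_of_pos hxA, count_roots,
      count_roots, ← tsub_le_iff_right]
    exact rootMultiplicity_sub_one_le_derivative_rootMultiplicity p x
  · simp only [Multiset.mem_filter, mem_roots hp] at hx hy
    obtain ⟨z, hz, hderiv⟩ := exists_deriv_eq_zero hxy p.continuousOn (hx.1.trans hy.1.symm)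
    rw [p.deriv] at hderiv
    exact ⟨z, Multiset.mem_filter.2
      ⟨(mem_roots hp').2 hderiv, hA.out hx.2 hy.2 (Set.Ioo_subset_Icc_self hz)⟩, hz⟩

end N0

theorem N0_iterate_derivative_add_le_natDegree {p : ℝ[X]} {m : ℕ} (hm : m ≤ p.natDegree)
    (A : Set ℝ) : N0 (derivative^[m] p) A + m ≤ p.natDegree :=
  (Nat.le_sub_iff_add_le hm).1
    ((N0_le_natDegree _ A).trans (natDegree_iterate_derivative p m))

theorem sum_N0_iterate_derivative_le (p : ℝ[X]) {m : ℕ} (Δ : Fin (m + 1) → Set ℝ)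
    (hΔ : ∀ k, Disjoint (convexHull ℝ (⋃ i < k, Δ i)) (Δ k)) :
    ∑ i : Fin (m + 1), N0 (derivative^[(i : ℕ)] p) (Δ i)
      ≤ N0 (derivative^[m] p) (convexHull ℝ (⋃ i, Δ i)) + m := by
  induction m with
  | zero => simpa using N0_mono p ((Set.subset_iUnion Δ 0).trans (subset_convexHull ℝ _))
  | succ m ih =>
    set I := convexHull ℝ (⋃ i : Fin (m + 1), Δ i.castSucc)
    have hinit (k : Fin (m + 1)) :
        Disjoint (convexHull ℝ (⋃ i < k, Δ i.castSucc)) (Δ k.castSucc) :=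
      (hΔ k.castSucc).mono_left <| convexHull_mono <| Set.iUnion₂_subset fun i hi =>
        Set.subset_biUnion_of_mem (u := Δ) (Fin.castSucc_lt_castSucc_iff.2 hi)
    have hlast : Disjoint I (Δ (Fin.last (m + 1))) :=
      (hΔ (Fin.last (m + 1))).mono_left <| convexHull_mono <| Set.iUnion_subset fun i =>
        Set.subset_biUnion_of_mem (u := Δ) (Fin.castSucc_lt_last i)
    have hsubset : I ∪ Δ (Fin.last (m + 1)) ⊆ convexHull ℝ (⋃ i, Δ i) :=
      Set.union_subset (convexHull_mono <| Set.iUnion_subset fun i => Set.subset_iUnion Δ _)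
        ((Set.subset_iUnion Δ _).trans (subset_convexHull ℝ _))
    calc ∑ i : Fin (m + 1 + 1), N0 (derivative^[(i : ℕ)] p) (Δ i)
        = ∑ i : Fin (m + 1), N0 (derivative^[(i : ℕ)] p) (Δ i.castSucc)
            + N0 (derivative^[m + 1] p) (Δ (Fin.last (m + 1))) := Fin.sum_univ_castSucc _
      _ ≤ N0 (derivative^[m] p) I + m + N0 (derivative^[m + 1] p) (Δ (Fin.last (m + 1))) := by
          gcongr
          exact ih _ hinit
      _ ≤ N0 (derivative^[m + 1] p) I + 1 + m
            + N0 (derivative^[m + 1] p) (Δ (Fin.last (m + 1))) := by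
          rw [Function.iterate_succ_apply']
          gcongr
          exact N0_le_N0_derivative_add_one _ (convex_convexHull ℝ _).ordConnected
      _ = N0 (derivative^[m + 1] p) (I ∪ Δ (Fin.last (m + 1))) + (m + 1) := by
          rw [N0_union _ hlast]
          ring
      _ ≤ N0 (derivative^[m + 1] p) (convexHull ℝ (⋃ i, Δ i)) + (m + 1) := by
          gcongr
          exact N0_mono _ hsubset

theorem statement8_general
    (m : ℕ) (L : Polynomial ℝ) (hL : (m : WithBot ℕ) ≤ L.degree)
    (Δ : Fin (m + 1) → Set ℝ)
    (hsep : ∀ k : Fin (m + 1), 0 < (k : ℕ) →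
      (convexHull ℝ (⋃ i ∈ {i : Fin (m + 1) | i < k}, Δ i)) ∩ Δ k = ∅) :
    (∑ i : Fin (m + 1), N0 (derivative^[(i : ℕ)] L) (Δ i))
        ≤ N0 (derivative^[m] L) (convexHull ℝ (⋃ i, Δ i)) + m ∧
      N0 (derivative^[m] L) (convexHull ℝ (⋃ i, Δ i)) + m ≤ L.natDegree := by
  have hdisj (k : Fin (m + 1)) : Disjoint (convexHull ℝ (⋃ i < k, Δ i)) (Δ k) := by
    obtain rfl | hk := eq_or_ne k 0
    · simp
    · exact Set.disjoint_iff_inter_eq_empty.2 (hsep k (Fin.pos_iff_ne_zero.2 hk))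
  exact ⟨sum_N0_iterate_derivative_le L Δ hdisj,
    N0_iterate_derivative_add_le_natDegree (le_natDegree_of_coe_le_degree hL) _⟩

/-- Lemma on zero counting: if the intervals `Δ 0, …, Δ m` satisfy
`conv(Δ 0 ∪ ⋯ ∪ Δ (k-1)) ∩ Δ k = ∅` for `k = 1, …, m`, then
`∑_{i=0}^m N₀(L^{(i)}; Δ i) ≤ N₀(L^{(m)}; I m) + m ≤ deg L`. -/
theorem statement8
    (m : ℕ) (L : Polynomial ℝ) (hL : (m : WithBot ℕ) ≤ L.degree)
    (Δ : Fin (m + 1) → Set ℝ) (hΔ : ∀ i, (Δ i).OrdConnected)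
    (hsep : ∀ k : Fin (m + 1), 0 < (k : ℕ) →
      (convexHull ℝ (⋃ i ∈ {i : Fin (m + 1) | i < k}, Δ i)) ∩ Δ k = ∅) :
    (∑ i : Fin (m + 1), N0 (derivative^[(i : ℕ)] L) (Δ i))
        ≤ N0 (derivative^[m] L) (convexHull ℝ (⋃ i, Δ i)) + m ∧
      N0 (derivative^[m] L) (convexHull ℝ (⋃ i, Δ i)) + m ≤ L.natDegree :=
  statement8_general m L hL Δ hsep

end
end

section
/- Let {(r_i, ν_i)}_{i=1}^{M} ⊂ ℝ × ℤ≥0 be a sequentially-ordered finite sequence of ordered pairs, i.e., 0 ≤ ν_1 ≤ ⋯ ≤ ν_M and r_k ∉ conv{r_1,…,r_{k−1}} for k = 1,…,M. Then there exists a unique monic polynomial U_M of minimal degree such that U_M^{(ν_i)}(r_i) = 0 for i = 1,…,M; moreover, deg U_M = κ_M, where κ_M = (min 𝕴_M) − 1 and 𝕴_M = {i : 1 ≤ i ≤ M and ν_i ≥ i} ∪ {M+1}. -/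
open MeasureTheory Polynomial Filter
open scoped Classical

noncomputable section

/-!
Suppose `f ≠ 0` satisfies all the conditions. Starting from the zero of `f^(ν 0)` at `r 0`, Rolle's
theorem loses one zero inside the current convex hull for every further derivative, while the next
node, lying outside that hull, adds one. So `f^(ν i)` has at least `i + 1 - ν i` zeros. If `ν i ≤ i`
then `f` cannot have degree exactly `i`, since `f^(ν i)` would be a nonzero polynomial of degree
`i - ν i`. Hence `κ ≤ deg f` for every nonzero solution `f`. Conversely the first `κ` conditions
have a nonzero solution of degree at most `κ` by counting dimensions, and the remaining conditions
hold automatically because `κ < ν i` there. Two monic solutions of degree `κ` differ by a solution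
of smaller degree, which must vanish.
-/

section Rolle

theorem encard_level_le_encard_deriv_zeros_add_one {g : ℝ → ℝ} {K : Set ℝ}
    (hK : K.OrdConnected) (hg : ContinuousOn g K) (c : ℝ) :
    {x ∈ K | g x = c}.encard ≤ {x ∈ K | deriv g x = 0}.encard + 1 := by
  rcases {x ∈ K | deriv g x = 0}.finite_or_infinite.symm with hinf | hfin
  · simp [hinf.encard_eq]
  obtain ⟨T, hT⟩ := hfin.exists_finset_coe
  have card_le : ∀ S : Finset ℝ, (S : Set ℝ) ⊆ {x ∈ K | g x = c} → S.card ≤ T.card + 1 := by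
    refine fun S hS ↦ Finset.card_le_of_interleaved fun x hx y hy hxy _ ↦ ?_
    have hsub : Set.Icc x y ⊆ K := hK.out (hS hx).1 (hS hy).1
    obtain ⟨z, hz, hdz⟩ :=
      exists_deriv_eq_zero hxy (hg.mono hsub) ((hS hx).2.trans (hS hy).2.symm)
    have hzT : z ∈ (T : Set ℝ) := hT ▸ ⟨hsub (Set.Ioo_subset_Icc_self hz), hdz⟩
    exact ⟨z, hzT, hz⟩
  rw [← hT, Set.encard_coe_eq_coe_finsetCard]
  by_contra! hlt
  obtain ⟨S, hS, hScard⟩ := Set.exists_subset_encard_eq (Order.add_one_le_of_lt hlt)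
  lift S to Finset ℝ using Set.finite_of_encard_eq_coe (k := T.card + 1 + 1) (mod_cast hScard)
  rw [Set.encard_coe_eq_coe_finsetCard] at hScard
  have := card_le S hS
  norm_cast at hScard
  omega

theorem encard_roots_le_encard_roots_iterate_derivative_add (f : ℝ[X]) {K : Set ℝ}
    (hK : K.OrdConnected) (k : ℕ) :
    {x ∈ K | f.IsRoot x}.encard ≤ {x ∈ K | (derivative^[k] f).IsRoot x}.encard + k := by
  induction k with
  | zero => simp
  | succ k ih =>
    have rolle := encard_level_le_encard_deriv_zeros_add_one hK
      (derivative^[k] f).continuous.continuousOn 0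
    simp only [Polynomial.deriv, ← Function.iterate_succ_apply' derivative] at rolle
    calc {x ∈ K | f.IsRoot x}.encard
        ≤ {x ∈ K | (derivative^[k] f).IsRoot x}.encard + k := ih
      _ ≤ {x ∈ K | (derivative^[k + 1] f).IsRoot x}.encard + 1 + k := by gcongr; exact rolle
      _ = {x ∈ K | (derivative^[k + 1] f).IsRoot x}.encard + (k + 1 : ℕ) := by
        push_cast; ring

end Rolle

section Degree

theorem encard_setOf_isRoot_le_natDegree {R : Type*} [CommRing R] [IsDomain R] {p : R[X]}
    (hp : p ≠ 0) : {x | p.IsRoot x}.encard ≤ p.natDegree := by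
  have hroots : {x | p.IsRoot x} = (p.roots.toFinset : Set R) := by ext x; simp [hp]
  rw [hroots, Set.encard_coe_eq_coe_finsetCard, Nat.cast_le]
  exact p.roots.toFinset_card_le.trans p.card_roots'

theorem iterate_derivative_ne_zero {R : Type*} [Semiring R] [IsAddTorsionFree R] {f : R[X]}
    (hf : f ≠ 0) {k : ℕ} (hk : k ≤ f.natDegree) : derivative^[k] f ≠ 0 := by
  induction k generalizing f with
  | zero => exact hf
  | succ k ih => exact ih (derivative_ne_zero.2 (by omega)) (by rw [natDegree_derivative]; omega)

theorem exists_isMonicOfDegree_natDegree_mem {F : Type*} [Field F] {W : Submodule F F[X]}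
    {f : F[X]} (hf : f ∈ W) (hf0 : f ≠ 0) : ∃ U ∈ W, IsMonicOfDegree U f.natDegree := by
  have hunit : f.leadingCoeff⁻¹ ≠ 0 := inv_ne_zero (leadingCoeff_ne_zero.2 hf0)
  refine ⟨f.leadingCoeff⁻¹ • f, W.smul_mem _ hf, ?_, ?_⟩
  · exact natDegree_smul_of_smul_regular f (IsSMulRegular.of_ne_zero hunit)
  · rw [Monic, leadingCoeff_smul_of_smul_regular f (IsSMulRegular.of_ne_zero hunit), smul_eq_mul,
      inv_mul_cancel₀ (leadingCoeff_ne_zero.2 hf0)]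

theorem eq_of_isMonicOfDegree_of_forall_le_natDegree {R : Type*} [Ring R] {W : Submodule R R[X]}
    {n : ℕ} (hmin : ∀ g ∈ W, g ≠ 0 → n ≤ g.natDegree) {U V : R[X]} (hUW : U ∈ W) (hVW : V ∈ W)
    (hU : IsMonicOfDegree U n) (hV : IsMonicOfDegree V n) : V = U := by
  by_contra hne
  have hsub : V - U ≠ 0 := sub_ne_zero.2 hne
  have hdeg := hmin (V - U) (W.sub_mem hVW hUW) hsub
  apply leadingCoeff_ne_zero.2 hsub
  rw [leadingCoeff, coeff_sub, hV.coeff_eq hU hdeg, sub_self]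

theorem exists_ne_zero_natDegree_le_forall_apply_eq_zero {ι F : Type*} [Fintype ι] [Field F]
    (φ : ι → F[X] →ₗ[F] F) :
    ∃ f : F[X], f ≠ 0 ∧ f.natDegree ≤ Fintype.card ι ∧ ∀ i, φ i f = 0 := by
  have hker : ((LinearMap.pi φ).domRestrict (degreeLT F (Fintype.card ι + 1))).ker ≠ ⊥ :=
    LinearMap.ker_ne_bot_of_finrank_lt <| by
      simp [Module.finrank_eq_card_basis (degreeLT.basis F (Fintype.card ι + 1))]
  obtain ⟨⟨f, hfdeg⟩, hf, hf0⟩ := Submodule.exists_mem_ne_zero_of_ne_bot hker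
  refine ⟨f, fun h ↦ hf0 (Subtype.ext h), ?_, congr_fun hf⟩
  rw [mem_degreeLT, degree_lt_iff_coeff_zero] at hfdeg
  exact natDegree_le_iff_coeff_eq_zero.2 fun N hN ↦ hfdeg N hN

end Degree

section Birkhoff

/-- The polynomials `f` satisfying the Birkhoff conditions `f^(ν i)(r i) = 0` for all `i`. -/
def birkhoffSpace {ι R : Type*} [Semiring R] (r : ι → R) (ν : ι → ℕ) : Submodule R R[X] :=
  ⨅ i, (leval (r i) ∘ₗ derivative ^ ν i).ker

theorem mem_birkhoffSpace {ι R : Type*} [Semiring R] {r : ι → R} {ν : ι → ℕ} {f : R[X]} :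
    f ∈ birkhoffSpace r ν ↔ ∀ i, (derivative^[ν i] f).eval (r i) = 0 := by
  simp [birkhoffSpace, Module.End.pow_apply]

/-- A sequence of pairs `(r i, ν i)` is sequentially ordered (with respect to the empty set) if the
orders `ν i` are nondecreasing and every node lies outside the convex hull of its predecessors. -/
structure IsSequentiallyOrdered {ι : Type*} [Preorder ι] (r : ι → ℝ) (ν : ι → ℕ) : Prop where
  monotone : Monotone ν
  notMem_convexHull : ∀ k, r k ∉ convexHull ℝ (r '' Set.Iio k)

/-- The number `κ_M` of the paper. With indices counted from `0`, it is the least index `i < M` with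
`i < ν i`, or `M` if there is no such index. -/
def kappa {M : ℕ} (ν : Fin M → ℕ) : ℕ :=
  sInf ({M} ∪ {k : ℕ | ∃ i : Fin M, (i : ℕ) = k ∧ k < ν i})

variable {M : ℕ} {r : Fin M → ℝ} {ν : Fin M → ℕ} {f : ℝ[X]}

theorem kappa_le (ν : Fin M → ℕ) : kappa ν ≤ M :=
  Nat.sInf_le (Or.inl rfl)

theorem kappa_le_of_lt {i : Fin M} (hi : (i : ℕ) < ν i) : kappa ν ≤ i :=
  Nat.sInf_le (Or.inr ⟨i, rfl, hi⟩)

theorem kappa_lt_of_kappa_le (hν : Monotone ν) {i : Fin M} (hi : kappa ν ≤ i) : kappa ν < ν i := by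
  have hmem : kappa ν ∈ {M} ∪ {k : ℕ | ∃ i : Fin M, (i : ℕ) = k ∧ k < ν i} :=
    Nat.sInf_mem ⟨M, Or.inl rfl⟩
  rcases hmem with hM | ⟨j, hj, hlt⟩
  · exact absurd (hM.symm.trans_le hi) i.isLt.not_ge
  · exact hlt.trans_le (hν (Fin.le_def.2 (hj ▸ hi)))

theorem exists_mem_birkhoffSpace_natDegree_le_kappa {F : Type*} [Field F] (r : Fin M → F)
    (hν : Monotone ν) : ∃ f ∈ birkhoffSpace r ν, f ≠ 0 ∧ f.natDegree ≤ kappa ν := by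
  let firstIndex : Fin (kappa ν) → Fin M := Fin.castLE (kappa_le ν)
  obtain ⟨f, hf0, hfdeg, hf⟩ := exists_ne_zero_natDegree_le_forall_apply_eq_zero
    fun i ↦ leval (r (firstIndex i)) ∘ₗ derivative ^ ν (firstIndex i)
  rw [Fintype.card_fin] at hfdeg
  refine ⟨f, mem_birkhoffSpace.2 fun i ↦ ?_, hf0, hfdeg⟩
  rcases lt_or_ge (i : ℕ) (kappa ν) with hi | hi
  · simpa [firstIndex, Module.End.pow_apply] using hf ⟨i, hi⟩
  · rw [iterate_derivative_eq_zero (hfdeg.trans_lt (kappa_lt_of_kappa_le hν hi)), eval_zero]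

namespace IsSequentiallyOrdered

theorem encard_roots_castSucc_add_one_le_encard_roots_succ {n : ℕ} {r : Fin (n + 1) → ℝ}
    {ν : Fin (n + 1) → ℕ} (h : IsSequentiallyOrdered r ν) (i : Fin n) {p : ℝ[X]}
    (hp : p.IsRoot (r i.succ)) :
    {x ∈ convexHull ℝ (r '' Set.Iic i.castSucc) | p.IsRoot x}.encard + 1 ≤
      {x ∈ convexHull ℝ (r '' Set.Iic i.succ) | p.IsRoot x}.encard := by
  have Iio_succ : Set.Iio i.succ = Set.Iic i.castSucc := by
    ext j; simp [Fin.lt_def, Fin.le_def]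
  have node_notMem : r i.succ ∉ {x ∈ convexHull ℝ (r '' Set.Iic i.castSucc) | p.IsRoot x} :=
    fun hmem ↦ h.notMem_convexHull i.succ (Iio_succ ▸ hmem.1)
  rw [← Set.encard_insert_of_notMem node_notMem]
  refine Set.encard_le_encard (Set.insert_subset ⟨?_, hp⟩ fun x hx ↦ ⟨?_, hx.2⟩)
  · exact subset_convexHull ℝ _ (Set.mem_image_of_mem r Set.self_mem_Iic)
  · exact convexHull_mono (Set.image_mono (Set.Iic_subset_Iic.2 i.castSucc_le_succ)) hx.1

theorem add_one_le_encard_roots_iterate_derivative_add (h : IsSequentiallyOrdered r ν)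
    (hf : f ∈ birkhoffSpace r ν) (i : Fin M) :
    (i : ℕ∞) + 1 ≤
      {x ∈ convexHull ℝ (r '' Set.Iic i) | (derivative^[ν i] f).IsRoot x}.encard + ν i := by
  have isRoot_node := mem_birkhoffSpace.1 hf
  cases M with
  | zero => exact i.elim0
  | succ n =>
    induction i using Fin.induction with
    | zero =>
      have : 1 ≤ {x ∈ convexHull ℝ (r '' Set.Iic 0) | (derivative^[ν 0] f).IsRoot x}.encard :=
        Set.one_le_encard_iff_nonempty.2 ⟨r 0,
          subset_convexHull ℝ _ (Set.mem_image_of_mem r Set.self_mem_Iic), isRoot_node 0⟩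
      simpa using this.trans le_self_add
    | succ i ih =>
      have hνi : ν i.castSucc ≤ ν i.succ := h.monotone i.castSucc_le_succ
      have rolle := encard_roots_le_encard_roots_iterate_derivative_add
        (derivative^[ν i.castSucc] f)
        (convex_convexHull ℝ (r '' Set.Iic i.castSucc)).ordConnected (ν i.succ - ν i.castSucc)
      rw [← Function.iterate_add_apply, Nat.sub_add_cancel hνi] at rolle
      have new_root := h.encard_roots_castSucc_add_one_le_encard_roots_succ i (isRoot_node i.succ)
      generalize {x ∈ convexHull ℝ (r '' Set.Iic i.castSucc) |
        (derivative^[ν i.succ] f).IsRoot x}.encard = N at rolle new_root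
      calc ((i.succ : ℕ) : ℕ∞) + 1
          = (i.castSucc : ℕ) + 1 + 1 := by simp
        _ ≤ N + (ν i.succ - ν i.castSucc : ℕ) + ν i.castSucc + 1 :=
          add_le_add_left (ih.trans (add_le_add_left rolle _)) 1
        _ = N + 1 + ν i.succ := by
          rw [add_assoc N, ← Nat.cast_add, Nat.sub_add_cancel hνi, add_right_comm]
        _ ≤ _ := by gcongr

theorem lt_of_natDegree_eq (h : IsSequentiallyOrdered r ν) (hf : f ∈ birkhoffSpace r ν)
    (hf0 : f ≠ 0) {i : Fin M} (hi : f.natDegree = i) : (i : ℕ) < ν i := by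
  by_contra! hle
  have many_roots := h.add_one_le_encard_roots_iterate_derivative_add hf i
  have few_roots : {x ∈ convexHull ℝ (r '' Set.Iic i) | (derivative^[ν i] f).IsRoot x}.encard ≤
      (i - ν i : ℕ) := calc
    _ ≤ {x | (derivative^[ν i] f).IsRoot x}.encard := Set.encard_le_encard fun _ hx ↦ hx.2
    _ ≤ (derivative^[ν i] f).natDegree :=
      encard_setOf_isRoot_le_natDegree (iterate_derivative_ne_zero hf0 (hi ▸ hle))
    _ ≤ (i - ν i : ℕ) := mod_cast hi ▸ natDegree_iterate_derivative f (ν i)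
  have : (i : ℕ∞) + 1 ≤ (i - ν i : ℕ) + ν i := many_roots.trans (by gcongr)
  norm_cast at this
  omega

theorem kappa_le_natDegree (h : IsSequentiallyOrdered r ν) (hf : f ∈ birkhoffSpace r ν)
    (hf0 : f ≠ 0) : kappa ν ≤ f.natDegree := by
  rcases lt_or_ge f.natDegree M with hlt | hge
  · exact kappa_le_of_lt (h.lt_of_natDegree_eq hf hf0 (i := ⟨f.natDegree, hlt⟩) rfl)
  · exact (kappa_le ν).trans hge

end IsSequentiallyOrdered

end Birkhoff

/-- For a sequentially-ordered sequence `{(r i, ν i)}`, there is a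
unique monic polynomial `U` of minimal degree with `U^{(ν i)}(r i) = 0` for all `i`,
and `deg U = κ_M`. -/
theorem statement9
    (M : ℕ) (r : Fin M → ℝ) (ν : Fin M → ℕ)
    (hν : ∀ i j : Fin M, i ≤ j → ν i ≤ ν j)
    (hr : ∀ k : Fin M, r k ∉ convexHull ℝ (r '' {j : Fin M | j < k})) :
    ∃ U : Polynomial ℝ,
      (U.Monic ∧ ∀ i, (derivative^[ν i] U).eval (r i) = 0) ∧
      (∀ V : Polynomial ℝ, V.Monic → (∀ i, (derivative^[ν i] V).eval (r i) = 0) →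
        U.natDegree ≤ V.natDegree ∧ (V.natDegree = U.natDegree → V = U)) ∧
      U.natDegree = sInf ({M} ∪ {k : ℕ | ∃ i : Fin M, (i : ℕ) = k ∧ k < ν i}) := by
  have hord : IsSequentiallyOrdered r ν := ⟨fun i j hij ↦ hν i j hij, hr⟩
  obtain ⟨f, hf, hf0, hfdeg⟩ := exists_mem_birkhoffSpace_natDegree_le_kappa r hord.monotone
  have hfκ : f.natDegree = kappa ν := hfdeg.antisymm (hord.kappa_le_natDegree hf hf0)
  obtain ⟨U, hUW, hU⟩ := exists_isMonicOfDegree_natDegree_mem hf hf0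
  rw [hfκ] at hU
  refine ⟨U, ⟨hU.monic, mem_birkhoffSpace.1 hUW⟩, fun V hV hVroots ↦ ?_, hU.natDegree_eq⟩
  have hVW : V ∈ birkhoffSpace r ν := mem_birkhoffSpace.2 hVroots
  rw [hU.natDegree_eq]
  exact ⟨hord.kappa_le_natDegree hVW hV.ne_zero, fun hVdeg ↦
    eq_of_isMonicOfDegree_of_forall_le_natDegree (fun _ ↦ hord.kappa_le_natDegree) hUW hVW hU
      ⟨hVdeg, hV⟩⟩

end
end
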